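/- Let f₁, f₂ be L¹-functions on [a,b], let g₁, g₂: [a,b] → (0,∞) be continuous, and let C > 0. Assume for all t ∈ [a,b]: f₁(t) ≥ g₁(t)·(C + ∫_a^t g₂(s) f₁(s) ds) and f₂(t) = g₁(t)·(C + ∫_a^t g₂(s) f₂(s) ds). Then f₁(t) ≥ f₂(t) for all t ∈ [a,b]. -/

import Mathlib

open MeasureTheory Set

/-!
Put `H t = ∫_a^t g₂ (f₁ - f₂)`. Subtracting the two hypotheses gives `f₁ - f₂ ≥ g₁ H` on `[a,b]`,
so it is enough to show `H ≥ 0`. Let `u = max (-H) 0` be the negative part of `H` and `M` a bound of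
`g₁ g₂`. Then `-H t ≤ ∫_a^t g₁ g₂ (-H) ≤ M ∫_a^t u`, and the right-hand side is nonnegative, so
`u t ≤ M ∫_a^t u`. Since `u` is continuous, Gronwall's inequality for `t ↦ ∫_a^t u` forces `u = 0`
on `[a,b]`.
-/

/-- Integral form of Gronwall's inequality with zero initial value. -/
lemma nonpos_of_le_mul_integral {a b M : ℝ} {u : ℝ → ℝ} (hu : Continuous u) (hu0 : ∀ t, 0 ≤ u t)
    (h : ∀ t ∈ Icc a b, u t ≤ M * ∫ s in a..t, u s) : ∀ t ∈ Icc a b, u t ≤ 0 := by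
  have hd : ∀ t, HasDerivAt (fun t => ∫ s in a..t, u s) (u t) t := fun t =>
    intervalIntegral.integral_hasDerivAt_right (hu.intervalIntegrable _ _)
      (hu.stronglyMeasurableAtFilter _ _) hu.continuousAt
  have hz := eq_zero_of_abs_deriv_le_mul_abs_self_of_eq_zero_right
    (f := fun t => ∫ s in a..t, u s) (f' := u) (K := M) (a := a) (b := b)
    (fun t _ => (hd t).continuousAt.continuousWithinAt)
    (fun t _ => (hd t).hasDerivWithinAt) (by simp)
    (fun t ht => by
      have hp : 0 ≤ ∫ s in a..t, u s :=
        intervalIntegral.integral_nonneg ht.1 fun s _ => hu0 s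
      rw [Real.norm_of_nonneg (hu0 t), Real.norm_of_nonneg hp]
      exact h t ⟨ht.1, ht.2.le⟩)
  intro t ht
  have := h t ht
  have hzt : ∫ s in a..t, u s = 0 := hz t ht
  rwa [hzt, mul_zero] at this

/-- Gronwall-type comparison: if `f₁, f₂ ∈ L¹([a,b])`, `g₁, g₂ : [a,b] → (0,∞)` are
continuous, `C > 0`, and for all `t ∈ [a,b]` we have
`f₁(t) ≥ g₁(t)·(C + ∫_a^t g₂ f₁)` and `f₂(t) = g₁(t)·(C + ∫_a^t g₂ f₂)`,
then `f₁ ≥ f₂` on `[a,b]`. -/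
theorem ge_of_integral_inequality
    (a b : ℝ) (hab : a ≤ b) (f₁ f₂ g₁ g₂ : ℝ → ℝ) (C : ℝ) (hC : 0 < C)
    (hf₁ : IntegrableOn f₁ (Icc a b))
    (hf₂ : IntegrableOn f₂ (Icc a b))
    (hg₁ : ContinuousOn g₁ (Icc a b)) (hg₁pos : ∀ t ∈ Icc a b, 0 < g₁ t)
    (hg₂ : ContinuousOn g₂ (Icc a b)) (hg₂pos : ∀ t ∈ Icc a b, 0 < g₂ t)
    (h₁ : ∀ t ∈ Icc a b, g₁ t * (C + ∫ s in Icc a t, g₂ s * f₁ s) ≤ f₁ t)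
    (h₂ : ∀ t ∈ Icc a b, f₂ t = g₁ t * (C + ∫ s in Icc a t, g₂ s * f₂ s)) :
    ∀ t ∈ Icc a b, f₂ t ≤ f₁ t := by
  have i₁ : IntegrableOn (fun s => g₂ s * f₁ s) (Icc a b) :=
    hf₁.continuousOn_mul hg₂ isCompact_Icc
  have i₂ : IntegrableOn (fun s => g₂ s * f₂ s) (Icc a b) :=
    hf₂.continuousOn_mul hg₂ isCompact_Icc
  -- Extending the integrand by zero makes its primitive `H` continuous on all of `ℝ`.
  set k : ℝ → ℝ := (Icc a b).indicator (fun s => g₂ s * f₁ s - g₂ s * f₂ s) with hk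
  have ik : Integrable k := (i₁.sub i₂).integrable_indicator measurableSet_Icc
  set H : ℝ → ℝ := fun t => ∫ s in a..t, k s with hH
  have cH : Continuous H := intervalIntegral.continuous_primitive
    (fun _ _ => ik.intervalIntegrable) a
  have eH : ∀ t ∈ Icc a b,
      (∫ s in Icc a t, g₂ s * f₁ s) - (∫ s in Icc a t, g₂ s * f₂ s) = H t := by
    intro t ht
    have hsub : Icc a t ⊆ Icc a b := Icc_subset_Icc_right ht.2
    rw [← integral_sub (i₁.mono_set hsub) (i₂.mono_set hsub), hH]
    simp only
    rw [intervalIntegral.integral_of_le ht.1, ← integral_Icc_eq_integral_Ioc]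
    refine setIntegral_congr_fun measurableSet_Icc fun s hs => ?_
    simp [hk, indicator_of_mem (hsub hs)]
  have hw : ∀ t ∈ Icc a b, g₁ t * H t ≤ f₁ t - f₂ t := by
    intro t ht
    rw [← eH t ht]
    linarith [h₁ t ht, h₂ t ht]
  obtain ⟨M, hM⟩ := isCompact_Icc.exists_bound_of_continuousOn (hg₁.mul hg₂)
  set u : ℝ → ℝ := fun t => max (-H t) 0 with hu
  have cu : Continuous u := cH.neg.max continuous_const
  have hu0 : ∀ t, 0 ≤ u t := fun t => le_max_right _ _
  have hpt : ∀ s ∈ Icc a b, -k s ≤ M * u s := by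
    intro s hs
    have e1 : k s = g₂ s * (f₁ s - f₂ s) := by
      simp only [hk, indicator_of_mem hs]; ring
    have hp := mul_pos (hg₁pos s hs) (hg₂pos s hs)
    have hle : g₁ s * g₂ s ≤ M := (le_abs_self _).trans (hM s hs)
    calc -k s ≤ g₁ s * g₂ s * (-H s) := by
          rw [e1]
          nlinarith [mul_le_mul_of_nonneg_left (hw s hs) (hg₂pos s hs).le]
      _ ≤ g₁ s * g₂ s * u s := mul_le_mul_of_nonneg_left (le_max_left _ _) hp.le
      _ ≤ M * u s := mul_le_mul_of_nonneg_right hle (hu0 s)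
  have hM0 : 0 ≤ M := (norm_nonneg _).trans (hM a (left_mem_Icc.2 hab))
  have hz := nonpos_of_le_mul_integral (a := a) (b := b) (M := M) cu hu0 (by
    intro t ht
    refine max_le ?_ (mul_nonneg hM0
      (intervalIntegral.integral_nonneg ht.1 fun s _ => hu0 s))
    rw [hH]
    simp only
    rw [← intervalIntegral.integral_neg, ← intervalIntegral.integral_const_mul]
    exact intervalIntegral.integral_mono_on ht.1 ik.neg.intervalIntegrable
      ((continuous_const.mul cu).intervalIntegrable _ _)
      fun s hs => hpt s ⟨hs.1, hs.2.trans ht.2⟩)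
  intro t ht
  have hHt : 0 ≤ H t := by
    have := (le_max_left (-H t) 0).trans (hz t ht)
    linarith
  linarith [hw t ht, mul_nonneg (hg₁pos t ht).le hHt]
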